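/- Let d ≥ 1 and f : D^d → C be holomorphic with |f| ≤ 1 on the open unit polydisk D^d. Then the kernel K(z,ζ) = (1 - f(z)·conj(f(ζ)))/∏_{j=1}^d (1 - z_j·conj(ζ_j)) is positive semi-definite on D^d. -/

import Mathlib

open Complex Finset ComplexOrder

/-- A kernel `K` is positive semi-definite on a subset `D`. -/
def IsPSDKernelOn {γ : Type*} (D : Set γ) (K : γ → γ → ℂ) : Prop :=
  ∀ (m : ℕ) (z : Fin m → γ), (∀ i, z i ∈ D) → ∀ c : Fin m → ℂ,
    0 ≤ ∑ i, ∑ j, c i * (starRingEnd ℂ) (c j) * K (z i) (z j)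

/-- The open unit polydisk in `ℂ^d`. -/
def Polydisk (d : ℕ) : Set (Fin d → ℂ) := {z | ∀ j, ‖z j‖ < 1}

/-!
Suppose first that `f` is holomorphic on a neighbourhood of the closed polydisk. By Cauchy's formula
the Szegő kernel functions `k_w = ∏ j, (1 - z_j * conj w_j)⁻¹` reproduce holomorphic functions in
`L²` of the torus. So multiplication by `f`, a contraction there, satisfies
`⟪k_z, f k_w⟫ = f z * ⟪k_z, k_w⟫`. For `g = ∑ conj c_i • k_{z_i}` and
`h = ∑ conj (c_i * f z_i) • k_{z_i}` this gives `‖h‖ ^ 2 = ⟪g, f h⟫ ≤ ‖g‖ * ‖h‖`, hence `‖h‖ ≤ ‖g‖`,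
and the quadratic form of the Pick kernel at `c` is `‖g‖ ^ 2 - ‖h‖ ^ 2`. The general case follows by
applying this to the dilations `z ↦ f (r z)` and letting `r → 1⁻`.
-/

open Filter MeasureTheory Metric
open scoped ComplexConjugate ENNReal InnerProductSpace Real Topology

section Kernels

variable {γ : Type*} {D : Set γ}

lemma IsPSDKernelOn.of_tendsto {ι : Type*} {l : Filter ι} [l.NeBot] {K : ι → γ → γ → ℂ}
    {K' : γ → γ → ℂ} (hK : ∀ᶠ r in l, IsPSDKernelOn D (K r))
    (hlim : ∀ z ∈ D, ∀ w ∈ D, Tendsto (fun r => K r z w) l (𝓝 (K' z w))) :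
    IsPSDKernelOn D K' := by
  intro m z hz c
  refine ge_of_tendsto (tendsto_finsetSum _ fun i _ => tendsto_finsetSum _ fun j _ =>
    (hlim (z i) (hz i) (z j) (hz j)).const_mul _) ?_
  filter_upwards [hK] with r hr using hr m z hz c

variable {𝕜 E : Type*} [RCLike 𝕜] [NormedAddCommGroup E] [InnerProductSpace 𝕜 E]

lemma inner_sum_conj_smul_sum_conj_smul {ι κ : Type*} (s : Finset ι) (t : Finset κ)
    (a : ι → 𝕜) (b : κ → 𝕜) (u : ι → E) (v : κ → E) :
    ⟪∑ i ∈ s, conj (a i) • u i, ∑ j ∈ t, conj (b j) • v j⟫_𝕜 =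
      ∑ i ∈ s, ∑ j ∈ t, a i * conj (b j) * ⟪u i, v j⟫_𝕜 := by
  simp only [sum_inner, inner_sum, inner_smul_left, inner_smul_right, RCLike.conj_conj, mul_sum]
  rw [sum_comm]
  exact sum_congr rfl fun i _ => sum_congr rfl fun j _ => by ring

/- By `hT`, the compression of `T†` to the span of the `u i` sends `u i` to `conj (φ i) • u i`,
hence `g` to `h`. -/
lemma sum_one_sub_mul_inner_nonneg {ι : Type*} (s : Finset ι) (u : ι → E) (φ c : ι → 𝕜)
    {T : E →L[𝕜] E} (hT_norm : ‖T‖ ≤ 1)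
    (hT : ∀ i j, ⟪u i, T (u j)⟫_𝕜 = φ i * ⟪u i, u j⟫_𝕜) :
    0 ≤ ∑ i ∈ s, ∑ j ∈ s, c i * conj (c j) * ((1 - φ i * conj (φ j)) * ⟪u i, u j⟫_𝕜) := by
  set g : E := ∑ i ∈ s, conj (c i) • u i with hg
  set h : E := ∑ i ∈ s, conj (c i * φ i) • u i with hh
  have inner_g_Th : ⟪g, T h⟫_𝕜 = ⟪h, h⟫_𝕜 := by
    simp only [hg, hh, map_sum, map_smul, inner_sum_conj_smul_sum_conj_smul, hT]
    exact sum_congr rfl fun i _ => sum_congr rfl fun j _ => by ring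
  have norm_h_le : ‖h‖ ≤ ‖g‖ := by
    have : ‖h‖ * ‖h‖ ≤ ‖g‖ * ‖h‖ := calc
      ‖h‖ * ‖h‖ = RCLike.re ⟪g, T h⟫_𝕜 := by rw [inner_g_Th, inner_self_eq_norm_mul_norm]
      _ ≤ ‖g‖ * ‖T h‖ := re_inner_le_norm g (T h)
      _ ≤ ‖g‖ * ‖h‖ := by gcongr; simpa using T.le_of_opNorm_le hT_norm h
    nlinarith [norm_nonneg g, norm_nonneg h]
  calc (0 : 𝕜) ≤ ((‖g‖ ^ 2 - ‖h‖ ^ 2 : ℝ) : 𝕜) := by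
        exact RCLike.ofReal_nonneg.2 (sub_nonneg.2 (by gcongr))
    _ = ⟪g, g⟫_𝕜 - ⟪h, h⟫_𝕜 := by simp only [inner_self_eq_norm_sq_to_K]; push_cast; rfl
    _ = _ := by
        simp only [hg, hh, inner_sum_conj_smul_sum_conj_smul, ← sum_sub_distrib]
        refine sum_congr rfl fun i _ => sum_congr rfl fun j _ => ?_
        rw [map_mul]
        ring

variable {X : Type*} [MeasurableSpace X] {μ : Measure X}

lemma inner_eq_integral_of_ae_eq {u v : Lp E 2 μ} {f g : X → E} (hu : u =ᵐ[μ] f)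
    (hv : v =ᵐ[μ] g) : ⟪u, v⟫_𝕜 = ∫ x, ⟪f x, g x⟫_𝕜 ∂μ := by
  rw [L2.inner_def]
  refine integral_congr_ae ?_
  filter_upwards [hu, hv] with x hux hvx
  rw [hux, hvx]

lemma norm_toLp_top_le {V : Type*} [NormedAddCommGroup V] {F : X → V} (hF : MemLp F ∞ μ) {C : ℝ}
    (hC : 0 ≤ C) (hF_le : ∀ᵐ x ∂μ, ‖F x‖ ≤ C) : ‖hF.toLp‖ ≤ C :=
  (Lp.norm_toLp F hF).trans_le <| ENNReal.toReal_le_of_le_ofReal hC <| by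
    simpa using eLpNormEssSup_le_of_ae_bound hF_le

lemma IsPSDKernelOn.of_multiplier
    {K : γ → γ → ℂ} {k : γ → X → ℂ} {φ : γ → ℂ} {F : X → ℂ} (hk : ∀ w ∈ D, MemLp (k w) 2 μ)
    (hF : AEStronglyMeasurable F μ) (hF_le : ∀ᵐ x ∂μ, ‖F x‖ ≤ 1)
    (hK : ∀ z ∈ D, ∀ w ∈ D, ∫ x, conj (k z x) * k w x ∂μ = K z w)
    (hFK : ∀ z ∈ D, ∀ w ∈ D, ∫ x, conj (k z x) * (F x * k w x) ∂μ = φ z * K z w) :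
    IsPSDKernelOn D fun z w => (1 - φ z * conj (φ w)) * K z w := by
  intro m z hz c
  have hF_top : MemLp F ∞ μ := memLp_top_of_bound hF 1 hF_le
  let u : Fin m → Lp ℂ 2 μ := fun i => (hk (z i) (hz i)).toLp
  let T : Lp ℂ 2 μ →L[ℂ] Lp ℂ 2 μ := (ContinuousLinearMap.mul ℂ ℂ).holderL μ ∞ 2 2 hF_top.toLp
  have hu (i) : u i =ᵐ[μ] k (z i) := MemLp.coeFn_toLp _
  have hTu (j) : T (u j) =ᵐ[μ] fun x => F x * k (z j) x := by
    filter_upwards [(ContinuousLinearMap.mul ℂ ℂ).coeFn_holder (r := 2) hF_top.toLp (u j),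
      hF_top.coeFn_toLp, hu j] with x hx hFx hux
    exact hx.trans (by rw [hFx, hux, ContinuousLinearMap.mul_apply'])
  have norm_T_le : ‖T‖ ≤ 1 := calc
    ‖T‖ ≤ ‖(ContinuousLinearMap.mul ℂ ℂ).holderL μ ∞ 2 2‖ * ‖hF_top.toLp‖ :=
      ContinuousLinearMap.le_opNorm _ _
    _ ≤ 1 * 1 := by
      gcongr
      · exact (ContinuousLinearMap.norm_holderL_le _).trans (ContinuousLinearMap.opNorm_mul_le ℂ ℂ)
      · exact norm_toLp_top_le hF_top zero_le_one hF_le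
    _ = 1 := one_mul 1
  have inner_u (i j) : ⟪u i, u j⟫_ℂ = K (z i) (z j) := by
    rw [← hK _ (hz i) _ (hz j), inner_eq_integral_of_ae_eq (hu i) (hu j)]
    simp only [RCLike.inner_apply']
  have inner_u_Tu (i j) : ⟪u i, T (u j)⟫_ℂ = φ (z i) * ⟪u i, u j⟫_ℂ := by
    rw [inner_u, ← hFK _ (hz i) _ (hz j), inner_eq_integral_of_ae_eq (hu i) (hTu j)]
    simp only [RCLike.inner_apply']
  have nonneg := sum_one_sub_mul_inner_nonneg univ u (φ ∘ z) c norm_T_le inner_u_Tu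
  simp only [inner_u] at nonneg
  exact nonneg

end Kernels

section CauchyFormula

variable {n : ℕ} {E : Type*} [NormedAddCommGroup E]

lemma continuous_torusMap (c : Fin n → ℂ) (R : Fin n → ℝ) : Continuous (torusMap c R) := by
  unfold torusMap
  fun_prop

lemma torusMap_mem_sphere (c : Fin n → ℂ) {R : Fin n → ℝ} (θ : Fin n → ℝ) {j : Fin n}
    (hR : 0 ≤ R j) : torusMap c R θ j ∈ sphere (c j) (R j) :=
  circleMap_mem_sphere (c j) hR (θ j)

variable [NormedSpace ℂ E]

lemma torusIntegrable_prod_sub_inv_smul {c w : Fin n → ℂ} {R : Fin n → ℝ}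
    {G : (Fin n → ℂ) → E} (hw : ∀ j, w j ∈ ball (c j) (R j))
    (hG : ContinuousOn G (Set.univ.pi fun j => sphere (c j) (R j))) :
    TorusIntegrable (fun ζ => (∏ j, (ζ j - w j)⁻¹) • G ζ) c R := by
  have mem_sphere (θ : Fin n → ℝ) (j) : torusMap c R θ j ∈ sphere (c j) (R j) :=
    torusMap_mem_sphere c θ (pos_of_mem_ball (hw j)).le
  refine Continuous.integrableOn_Icc (.smul (continuous_finsetProd _ fun j _ => ?_) ?_)
  · refine (((continuous_apply j).comp (continuous_torusMap c R)).sub continuous_const).inv₀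
      fun θ => sub_ne_zero.2 fun h => ?_
    exact sphere_disjoint_ball.ne_of_mem (mem_sphere θ j) (hw j) h
  · exact hG.comp_continuous (continuous_torusMap c R) fun θ j _ => mem_sphere θ j

theorem torusIntegral_prod_sub_inv_smul [CompleteSpace E] {c w : Fin n → ℂ} {R : Fin n → ℝ}
    {G : (Fin n → ℂ) → E} (hw : ∀ j, w j ∈ ball (c j) (R j))
    (hG : DifferentiableOn ℂ G (Set.univ.pi fun j => closedBall (c j) (R j))) :
    (∯ ζ in T(c, R), (∏ j, (ζ j - w j)⁻¹) • G ζ) = (2 * π * I : ℂ) ^ n • G w := by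
  induction n with
  | zero => simp [Subsingleton.elim c w]
  | succ n ih =>
    have integrable := torusIntegrable_prod_sub_inv_smul hw
      (hG.continuousOn.mono (Set.pi_mono fun j _ => sphere_subset_closedBall))
    have maps_cons {x : ℂ} (hx : x ∈ closedBall (c 0) (R 0)) :
        Set.MapsTo (fun y : Fin n → ℂ => (Fin.cons x y : Fin (n + 1) → ℂ))
          (Set.univ.pi fun j => closedBall (c j.succ) (R j.succ))
          (Set.univ.pi fun j => closedBall (c j) (R j)) :=
      fun y hy j _ => Fin.cases hx (fun j => hy j (Set.mem_univ j)) j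
    have inner_integral (x : ℂ) (hx : x ∈ sphere (c 0) (R 0)) :
        (∯ y in T(c ∘ Fin.succ, R ∘ Fin.succ),
          (∏ j, ((Fin.cons x y : Fin (n + 1) → ℂ) j - w j)⁻¹) • G (Fin.cons x y)) =
        (x - w 0)⁻¹ • (2 * π * I : ℂ) ^ n • G (Fin.cons x (Fin.tail w)) := by
      simp only [Fin.prod_univ_succ, Fin.cons_zero, Fin.cons_succ, mul_smul, torusIntegral_smul]
      congr 1
      refine ih (fun j => hw j.succ) (hG.comp ?_ (maps_cons (sphere_subset_closedBall hx)))
      exact ((differentiable_const x).finCons differentiable_id).differentiableOn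
    have slice_differentiable : DifferentiableOn ℂ
        (fun x => (2 * π * I : ℂ) ^ n • G (Fin.cons x (Fin.tail w))) (closedBall (c 0) (R 0)) := by
      refine (hG.comp (f := fun x => Fin.cons x (Fin.tail w)) ?_ ?_).const_smul _
      · exact (differentiable_id.finCons (φs := fun _ => Fin.tail w)
          (differentiable_const _)).differentiableOn
      · exact fun x hx => maps_cons hx fun j _ => ball_subset_closedBall (hw j.succ)
    rw [torusIntegral_succ integrable,
      circleIntegral.integral_congr (pos_of_mem_ball (hw 0)).le inner_integral,
      slice_differentiable.circleIntegral_sub_inv_smul (hw 0), Fin.cons_self_tail, smul_smul,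
      pow_succ']

end CauchyFormula

section Szego

variable {n : ℕ}

/-- The Szegő kernel of the polydisk, the reproducing kernel of its Hardy space. -/
noncomputable def szegoKernel (z w : Fin n → ℂ) : ℂ := ∏ j, (1 - z j * conj (w j))⁻¹

/-- The normalised Haar measure of the `n`-torus, in the angular coordinates of `torusMap`. -/
noncomputable def torusMeasure (n : ℕ) : Measure (Fin n → ℝ) :=
  ProbabilityTheory.cond volume (Set.Icc 0 fun _ => 2 * π)

lemma norm_torusMap_zero_one (θ : Fin n → ℝ) (j : Fin n) : ‖torusMap 0 1 θ j‖ = 1 :=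
  mem_sphere_zero_iff_norm.1 (torusMap_mem_sphere 0 (R := 1) θ zero_le_one)

lemma torusMap_zero_one_mem_closedBall (θ : Fin n → ℝ) : torusMap 0 1 θ ∈ closedBall 0 1 :=
  mem_closedBall_zero_iff.2 <|
    (pi_norm_le_iff_of_nonneg zero_le_one).2 fun j => (norm_torusMap_zero_one θ j).le

lemma continuous_comp_torusMap_zero_one {E : Type*} [TopologicalSpace E] {G : (Fin n → ℂ) → E}
    (hG : ContinuousOn G (closedBall 0 1)) : Continuous fun θ => G (torusMap 0 1 θ) :=
  hG.comp_continuous (continuous_torusMap 0 1) torusMap_zero_one_mem_closedBall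

lemma differentiableOn_szegoKernel {w : Fin n → ℂ} (hw : w ∈ ball 0 1) :
    DifferentiableOn ℂ (fun z => szegoKernel z w) (closedBall 0 1) := by
  have factor_ne_zero {z : Fin n → ℂ} (hz : z ∈ closedBall 0 1) (j : Fin n) :
      1 - z j * conj (w j) ≠ 0 := by
    intro h
    have norm_lt : ‖z j * conj (w j)‖ < 1 := calc
      ‖z j * conj (w j)‖ = ‖z j‖ * ‖w j‖ := by rw [norm_mul, RCLike.norm_conj]
      _ ≤ 1 * ‖w‖ := by
        gcongr
        exacts [(norm_le_pi_norm z j).trans (mem_closedBall_zero_iff.1 hz), norm_le_pi_norm w j]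
      _ < 1 := by simpa using hw
    rw [← sub_eq_zero.1 h, norm_one] at norm_lt
    exact norm_lt.false
  have factor_differentiableOn (j : Fin n) :
      DifferentiableOn ℂ (fun z : Fin n → ℂ => (1 - z j * conj (w j))⁻¹) (closedBall 0 1) :=
    DifferentiableOn.fun_inv (by fun_prop) fun z hz => factor_ne_zero hz j
  exact fun z hz => (HasFDerivWithinAt.finsetProd fun j _ =>
    (factor_differentiableOn j z hz).hasFDerivWithinAt).differentiableWithinAt

lemma conj_szegoKernel_of_norm_eq_one {ζ : Fin n → ℂ} (hζ : ∀ j, ‖ζ j‖ = 1) (w : Fin n → ℂ) :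
    conj (szegoKernel ζ w) = (∏ j, ζ j) * ∏ j, (ζ j - w j)⁻¹ := by
  rw [szegoKernel, map_prod, ← prod_mul_distrib]
  refine prod_congr rfl fun j _ => ?_
  have conj_mul_self : conj (ζ j) * ζ j = 1 := by rw [Complex.conj_mul', hζ]; norm_num
  have factor : 1 - conj (ζ j) * w j = (ζ j)⁻¹ * (ζ j - w j) := by
    rw [← eq_inv_of_mul_eq_one_left conj_mul_self, mul_sub, conj_mul_self]
  rw [map_inv₀, map_sub, map_one, map_mul, Complex.conj_conj, factor, mul_inv, inv_inv]

variable {E : Type*} [NormedAddCommGroup E]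

lemma memLp_two_torusMeasure {u : (Fin n → ℝ) → E} (hu : Continuous u) :
    MemLp u 2 (torusMeasure n) := by
  have : Integrable (fun θ => ‖u θ‖ ^ 2) (torusMeasure n) :=
    ((hu.norm.pow 2).integrableOn_Icc (μ := volume)).smul_measure
      (by simp [Real.volume_Icc_pi, Real.pi_pos])
  exact (memLp_two_iff_integrable_sq_norm hu.aestronglyMeasurable).2 this

lemma integral_torusMeasure [NormedSpace ℝ E] (g : (Fin n → ℝ) → E) :
    ∫ θ, g θ ∂torusMeasure n =
      ((2 * π) ^ n)⁻¹ • ∫ θ in Set.Icc (0 : Fin n → ℝ) fun _ => 2 * π, g θ := by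
  have volume_box : volume.real (Set.Icc (0 : Fin n → ℝ) fun _ => 2 * π) = (2 * π) ^ n := by
    rw [measureReal_def, Pi.zero_def, Real.volume_Icc_pi_toReal fun _ => Real.two_pi_pos.le]
    simp
  rw [torusMeasure, ProbabilityTheory.cond, integral_smul_measure, ENNReal.toReal_inv,
    ← measureReal_def, volume_box]

variable [NormedSpace ℂ E]

lemma torusIntegral_zero_one (f : (Fin n → ℂ) → E) :
    (∯ ζ in T(0, 1), f ζ) =
      (2 * π * I : ℂ) ^ n • ∫ θ, (∏ j, torusMap 0 1 θ j) • f (torusMap 0 1 θ) ∂torusMeasure n := by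
  have jacobian (θ : Fin n → ℝ) :
      ∏ j, ((1 : Fin n → ℝ) j : ℂ) * exp (θ j * I) * I = I ^ n * ∏ j, torusMap 0 1 θ j := by
    simp [torusMap, prod_mul_distrib, mul_comm]
  simp only [torusIntegral, jacobian, mul_smul, integral_smul]
  rw [integral_torusMeasure, ← Complex.coe_smul, smul_smul]
  congr 1
  push_cast
  field_simp
  rw [← mul_pow, mul_comm I]

theorem integral_conj_szegoKernel_smul [CompleteSpace E] {w : Fin n → ℂ} (hw : w ∈ ball 0 1)
    {G : (Fin n → ℂ) → E} (hG : DifferentiableOn ℂ G (closedBall 0 1)) :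
    ∫ θ, conj (szegoKernel (torusMap 0 1 θ) w) • G (torusMap 0 1 θ) ∂torusMeasure n = G w := by
  have hw_pi (j) : w j ∈ ball ((0 : Fin n → ℂ) j) ((1 : Fin n → ℝ) j) := by
    simpa using (norm_le_pi_norm w j).trans_lt (mem_ball_zero_iff.1 hw)
  have hG_pi : DifferentiableOn ℂ G
      (Set.univ.pi fun j => closedBall ((0 : Fin n → ℂ) j) ((1 : Fin n → ℝ) j)) := by
    simpa only [Pi.one_apply, closedBall_pi _ zero_le_one] using hG
  have cauchy := torusIntegral_prod_sub_inv_smul hw_pi hG_pi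
  rw [torusIntegral_zero_one] at cauchy
  simpa only [conj_szegoKernel_of_norm_eq_one (norm_torusMap_zero_one _), mul_smul] using
    smul_right_injective E (pow_ne_zero n two_pi_I_ne_zero) cauchy

end Szego

lemma isPSDKernelOn_pick_of_differentiableOn_closedBall {n : ℕ} {f : (Fin n → ℂ) → ℂ}
    (hf : DifferentiableOn ℂ f (closedBall 0 1)) (hf_le : ∀ z ∈ closedBall 0 1, ‖f z‖ ≤ 1) :
    IsPSDKernelOn (ball 0 1) fun z w => (1 - f z * conj (f w)) * szegoKernel z w := by
  refine IsPSDKernelOn.of_multiplier (μ := torusMeasure n)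
    (k := fun w θ => szegoKernel (torusMap 0 1 θ) w) (F := fun θ => f (torusMap 0 1 θ))
    ?_ ?_ ?_ ?_ ?_
  · exact fun w hw => memLp_two_torusMeasure
      (continuous_comp_torusMap_zero_one (differentiableOn_szegoKernel hw).continuousOn)
  · exact (continuous_comp_torusMap_zero_one hf.continuousOn).aestronglyMeasurable
  · exact ae_of_all _ fun θ => hf_le _ (torusMap_zero_one_mem_closedBall θ)
  · exact fun z hz w hw => integral_conj_szegoKernel_smul hz (differentiableOn_szegoKernel hw)
  · exact fun z hz w hw =>
      integral_conj_szegoKernel_smul hz (hf.fun_mul (differentiableOn_szegoKernel hw))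

lemma mapsTo_smul_closedBall_ball {𝕜 V : Type*} [NormedField 𝕜] [SeminormedAddCommGroup V]
    [NormedSpace 𝕜 V] {r : 𝕜} (hr : ‖r‖ < 1) {R : ℝ} (hR : 0 < R) :
    Set.MapsTo (r • ·) (closedBall (0 : V) R) (ball 0 R) := by
  intro z hz
  rw [mem_ball_zero_iff, norm_smul]
  calc ‖r‖ * ‖z‖ ≤ ‖r‖ * R := by gcongr; exact mem_closedBall_zero_iff.1 hz
    _ < R := mul_lt_of_lt_one_left hR hr

lemma tendsto_comp_smul_nhds_one {M V Y : Type*} [Monoid M] [TopologicalSpace M]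
    [TopologicalSpace V] [MulAction M V] [ContinuousSMul M V] [TopologicalSpace Y]
    {f : V → Y} {z : V} (hf : ContinuousAt f z) :
    Tendsto (fun r : M => f (r • z)) (𝓝 1) (𝓝 (f z)) :=
  hf.tendsto.comp <| (continuous_id.smul continuous_const).tendsto' 1 z (one_smul M z)

lemma polydisk_eq_ball (n : ℕ) : Polydisk n = ball 0 1 := by
  ext z
  simp [Polydisk, pi_norm_lt_iff]

theorem pick_kernel_psd_polydisk (d : ℕ) (hd : 1 ≤ d) (f : (Fin d → ℂ) → ℂ)
    (hf : DifferentiableOn ℂ f (Polydisk d))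
    (hb : ∀ z ∈ Polydisk d, ‖f z‖ ≤ 1) :
    IsPSDKernelOn (Polydisk d)
      (fun z w => (1 - f z * (starRingEnd ℂ) (f w)) /
        ∏ j, (1 - z j * (starRingEnd ℂ) (w j))) := by
  rw [polydisk_eq_ball] at hf hb ⊢
  suffices IsPSDKernelOn (ball 0 1) fun z w => (1 - f z * conj (f w)) * szegoKernel z w by
    simpa only [szegoKernel, prod_inv_distrib, ← div_eq_mul_inv] using this
  have dilate_psd : ∀ᶠ r : ℝ in 𝓝[<] 1, IsPSDKernelOn (ball 0 1) fun z w =>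
      (1 - f (r • z) * conj (f (r • w))) * szegoKernel z w := by
    filter_upwards [Ioo_mem_nhdsLT zero_lt_one] with r hr
    have maps := mapsTo_smul_closedBall_ball (V := Fin d → ℂ) (r := r) (R := 1)
      (by simpa only [Real.norm_of_nonneg hr.1.le] using hr.2) one_pos
    exact isPSDKernelOn_pick_of_differentiableOn_closedBall
      (hf.comp (by fun_prop) maps) fun z hz => hb _ (maps hz)
  have tendsto_dilate {z} (hz : z ∈ ball 0 1) :
      Tendsto (fun r : ℝ => f (r • z)) (𝓝[<] 1) (𝓝 (f z)) :=
    (tendsto_comp_smul_nhds_one (hf.continuousOn.continuousAt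
      (isOpen_ball.mem_nhds hz))).mono_left nhdsWithin_le_nhds
  refine .of_tendsto dilate_psd fun z hz w hw => .mul_const _ (.const_sub _ ?_)
  exact (tendsto_dilate hz).mul (continuous_conj.continuousAt.tendsto.comp (tendsto_dilate hw))
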